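/- Let t ≥ 3 be an integer. For any ε > 0 there exist constants C₁ = C₁(t, ε) > 0 and C₂ = C₂(t, ε) > 0 such that the following holds. Let T be a tournament containing no copy of the unavoidable t-tournament 𝒰_t, and let σ be an ordering of V(T) that minimises the number of backward edges. Then for any interval I in σ consisting of n ≥ C₁ consecutive vertices, at most C₂ vertices of I are incident with more than εn backward edges of σ having both endpoints in I. -/

import Mathlib

/-- `T` is a tournament: an orientation of the complete graph. -/
def IsTournament {V : Type*} (T : V → V → Prop) : Prop :=
  (∀ x, ¬ T x x) ∧ ∀ x y, x ≠ y → (T x y ↔ ¬ T y x)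

/-- The unavoidable `t`-tournament `𝒰_t` on `Fin 3 × Fin t`: three transitive classes
of order `t`, with all edges from class `i` to class `i + 1` (mod 3). -/
def UPat (t : ℕ) (p q : Fin 3 × Fin t) : Prop :=
  (p.1 = q.1 ∧ p.2 < q.2) ∨ q.1 = p.1 + 1

/-- `T` contains a copy of the unavoidable `t`-tournament `𝒰_t`. -/
def ContainsU {V : Type*} (T : V → V → Prop) (t : ℕ) : Prop :=
  ∃ f : Fin 3 × Fin t → V, Function.Injective f ∧
    ∀ p q : Fin 3 × Fin t, UPat t p q → T (f p) (f q)

/-- The number of backward edges of the ordering `σ` of the vertices of `T`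
(position `k` is occupied by the vertex `σ k`). -/
noncomputable def backCount {n : ℕ} {V : Type*} (T : V → V → Prop) (σ : Fin n ≃ V) : ℕ :=
  {p : Fin n × Fin n | p.1 < p.2 ∧ T (σ p.2) (σ p.1)}.ncard

/-!
A large vertex set in a `𝒰_t`-free tournament spans few cyclic triangles: a positive density of
them would give, by iterating the Kővári–Sós–Turán argument, three large sets joined completely in
cyclic order, hence a copy of `𝒰_t`. Since the average vertex is the midpoint of quadratically many
directed 2-paths, some pivot then has relatively few edges from its out-neighbours to its
in-neighbours; placing in-neighbours before the pivot and out-neighbours after it, and recursing as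
in quicksort, orders the set with few backward edges.

An ordering minimising backward edges is also optimal on every interval. There, moving a single
vertex `k` earlier cannot help, so if `k` has many out-neighbours before it, cutting them at their
median yields a large set `A` of out-neighbours preceding a large set `B` of in-neighbours; many
in-neighbours after `k` are handled dually. Every edge between `A` and `B` is backward or closes a
cyclic triangle with `k`, and backward edges are few, so `k` lies in a positive proportion of all
possible cyclic triangles. Only boundedly many vertices can do so.
-/

section TournamentOrderings

open Finset
open scoped Nat

/-! ### Dense tripartite relations -/

lemma card_mul_pow_le_sum_pow {ι : Type*} (P : Finset ι) (f : ι → ℝ) (hf : ∀ i ∈ P, 0 ≤ f i)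
    {a : ℝ} (ha : 0 ≤ a) (hsum : #P * a ≤ ∑ i ∈ P, f i) (s : ℕ) :
    #P * a ^ s ≤ ∑ i ∈ P, f i ^ s := by
  obtain rfl | hP := P.eq_empty_or_nonempty
  · simp
  have hP' : (0 : ℝ) < #P := by exact_mod_cast hP.card_pos
  have hjensen := Real.pow_arith_mean_le_arith_mean_pow P (fun _ => (#P : ℝ)⁻¹) f
    (fun _ _ => by positivity) (by simp [hP'.ne']) hf s
  simp only [← mul_sum] at hjensen
  rw [← le_inv_mul_iff₀ hP'] at hsum ⊢
  exact (pow_le_pow_left₀ ha hsum s).trans hjensen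

open Classical in
lemma sum_card_common_eq_sum_choose {α β : Type*} (X : Finset α) (P : Finset β)
    (E : α → β → Prop) (s : ℕ) :
    ∑ S ∈ X.powersetCard s, #{p ∈ P | ∀ x ∈ S, E x p} = ∑ p ∈ P, (#{x ∈ X | E x p}).choose s := by
  refine (sum_card_bipartiteAbove_eq_sum_card_bipartiteBelow fun S p => ∀ x ∈ S, E x p).trans
    (sum_congr rfl fun p _ => ?_)
  rw [← card_powersetCard]
  congr 1
  ext S
  simp only [mem_bipartiteBelow, mem_powersetCard, subset_iff, mem_filter]
  grind

open Classical in
lemma exists_powersetCard_card_common_ge {α β : Type*} {X : Finset α} {P : Finset β}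
    {E : α → β → Prop} {s : ℕ} {c : ℝ} (hc : 0 ≤ c) (hsX : s ≤ #X) (hX : 2 * s ≤ c * #X)
    (hE : c * #X * #P ≤ ∑ x ∈ X, (#{p ∈ P | E x p} : ℝ)) :
    ∃ S ∈ X.powersetCard s, (c / 2) ^ s * #P ≤ #{p ∈ P | ∀ x ∈ S, E x p} := by
  let d : β → ℕ := fun p => #{x ∈ X | E x p}
  have hd : c * #X * #P ≤ ∑ p ∈ P, (d p : ℝ) := by
    refine hE.trans_eq ?_
    exact_mod_cast sum_card_bipartiteAbove_eq_sum_card_bipartiteBelow E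
  -- Jensen is applied to `d p + 1 - s` because `(d p + 1 - s) ^ s ≤ s ! * (d p).choose s`.
  have hd' : #P * (c / 2 * #X) ≤ ∑ p ∈ P, ((d p + 1 - s : ℕ) : ℝ) :=
    calc #P * (c / 2 * #X) ≤ c * #X * #P - #P * s := by
          nlinarith [mul_le_mul_of_nonneg_left hX (Nat.cast_nonneg (α := ℝ) #P)]
      _ ≤ ∑ p ∈ P, ((d p : ℝ) - s) := by
          rw [sum_sub_distrib, sum_const, nsmul_eq_mul]
          gcongr
      _ ≤ ∑ p ∈ P, ((d p + 1 - s : ℕ) : ℝ) := sum_le_sum fun p _ => by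
          rw [sub_le_iff_le_add]
          exact_mod_cast (by omega : d p ≤ d p + 1 - s + s)
  refine exists_le_of_sum_le (powersetCard_nonempty.2 hsX) ?_
  calc ∑ _S ∈ X.powersetCard s, (c / 2) ^ s * (#P : ℝ)
      = (#X).choose s * ((c / 2) ^ s * #P) := by rw [sum_const, card_powersetCard, nsmul_eq_mul]
    _ ≤ (#X : ℝ) ^ s / s ! * ((c / 2) ^ s * #P) := by gcongr; exact Nat.choose_le_pow_div s _
    _ = #P * (c / 2 * #X) ^ s / s ! := by ring
    _ ≤ (∑ p ∈ P, ((d p + 1 - s : ℕ) : ℝ) ^ s) / s ! := by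
        gcongr
        exact card_mul_pow_le_sum_pow P _ (fun _ _ => Nat.cast_nonneg _) (by positivity) hd' s
    _ ≤ ∑ p ∈ P, ((d p).choose s : ℝ) := by
        rw [sum_div]
        exact sum_le_sum fun p _ => Nat.pow_le_choose s (d p)
    _ = ∑ S ∈ X.powersetCard s, (#{p ∈ P | ∀ x ∈ S, E x p} : ℝ) := by
        exact_mod_cast (sum_card_common_eq_sum_choose X P E s).symm

lemma eventually_le_mul_natCast (a : ℝ) {c : ℝ} (hc : 0 < c) :
    ∀ᶠ n : ℕ in Filter.atTop, a ≤ c * n :=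
  (tendsto_natCast_atTop_atTop.const_mul_atTop hc).eventually_ge_atTop a

open Classical in
lemma exists_box_of_dense (s : ℕ) {c : ℝ} (hc : 0 < c) :
    ∃ M : ℕ, ∀ {α β γ : Type*} {X : Finset α} {Y : Finset β} {Z : Finset γ} {E : α → β → γ → Prop},
      M ≤ #X → M ≤ #Y → M ≤ #Z →
      c * #X * (#Y * #Z) ≤ ∑ x ∈ X, (#{p ∈ Y ×ˢ Z | E x p.1 p.2} : ℝ) →
      ∃ S₁ ∈ X.powersetCard s, ∃ S₂ ∈ Y.powersetCard s, ∃ S₃ ∈ Z.powersetCard s,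
        ∀ x ∈ S₁, ∀ y ∈ S₂, ∀ z ∈ S₃, E x y z := by
  obtain ⟨c₁, hc₁⟩ : ∃ c₁, c₁ = (c / 2) ^ s := ⟨_, rfl⟩
  have hc₁pos : 0 < c₁ := hc₁ ▸ by positivity
  obtain ⟨M, hM⟩ := (((Filter.eventually_ge_atTop s).and
    (eventually_le_mul_natCast (2 * s) hc)).and
    ((eventually_le_mul_natCast (2 * s) hc₁pos).and
    (eventually_le_mul_natCast s (by positivity : 0 < (c₁ / 2) ^ s)))).exists_forall_of_atTop
  refine ⟨M, fun {α β γ X Y Z E} hX hY hZ hE => ?_⟩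
  obtain ⟨S₁, hS₁, hcommon₁⟩ := exists_powersetCard_card_common_ge
    (P := Y ×ˢ Z) (E := fun x p => E x p.1 p.2) hc.le (hM _ hX).1.1 (hM _ hX).1.2
    (by rw [card_product]; exact_mod_cast hE)
  have hfibre : #{p ∈ Y ×ˢ Z | ∀ x ∈ S₁, E x p.1 p.2} = ∑ y ∈ Y, #{z ∈ Z | ∀ x ∈ S₁, E x y z} := by
    simp only [card_filter, sum_product]
  rw [← hc₁, card_product, hfibre, Nat.cast_mul, ← mul_assoc, Nat.cast_sum] at hcommon₁
  obtain ⟨S₂, hS₂, hcommon₂⟩ := exists_powersetCard_card_common_ge (X := Y) (P := Z)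
    (E := fun y z => ∀ x ∈ S₁, E x y z) hc₁pos.le (hM _ hY).1.1 (hM _ hY).2.1
    (hcommon₁.trans_eq (by congr!))
  have hs : (s : ℝ) ≤ #{z ∈ Z | ∀ y ∈ S₂, ∀ x ∈ S₁, E x y z} :=
    ((hM _ hZ).2.2.trans hcommon₂).trans_eq (by congr!)
  obtain ⟨S₃, hS₃, hS₃card⟩ := exists_subset_card_eq (Nat.cast_le.1 hs)
  exact ⟨S₁, hS₁, S₂, hS₂, S₃, mem_powersetCard.2 ⟨hS₃.trans (filter_subset _ _), hS₃card⟩,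
    fun x hx y hy z hz => (mem_filter.1 (hS₃ hz)).2 y hy x hx⟩

/-! ### Cyclic triangles -/

namespace IsTournament

variable {V : Type*} {T : V → V → Prop}

lemma asymm (hT : IsTournament T) {x y : V} (h : T x y) : ¬ T y x := by
  obtain rfl | hne := eq_or_ne x y
  · exact hT.1 x
  · exact (hT.2 x y hne).1 h

lemma ne (hT : IsTournament T) {x y : V} (h : T x y) : x ≠ y := by
  rintro rfl
  exact hT.1 x h

lemma of_not (hT : IsTournament T) {x y : V} (hne : x ≠ y) (h : ¬ T x y) : T y x :=
  (hT.2 y x hne.symm).2 h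

lemma flip (hT : IsTournament T) : IsTournament (flip T) :=
  ⟨hT.1, fun x y hne => hT.2 y x hne.symm⟩

open Classical in
lemma card_out_add_card_in (hT : IsTournament T) {W : Finset V} {v : V} (hv : v ∈ W) :
    #{x ∈ W | T v x} + #{x ∈ W | T x v} + 1 = #W := by
  have hout : {x ∈ W | T v x} = {x ∈ W.erase v | T v x} := by
    ext x
    grind [hT.1 v]
  have hin : {x ∈ W | T x v} = {x ∈ W.erase v | ¬ T v x} := by
    ext x
    grind [hT.2 x v, hT.1 v]
  rw [hout, hin, card_filter_add_card_filter_not, card_erase_add_one hv]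

open Classical in
lemma exists_transitive_list (hT : IsTournament T) (t : ℕ) (S : Finset V) (hS : 2 ^ t ≤ #S) :
    ∃ l : List V, l.length = t ∧ l.Pairwise T ∧ ∀ x ∈ l, x ∈ S := by
  induction t generalizing S with
  | zero => exact ⟨[], rfl, .nil, by simp⟩
  | succ t ih =>
    obtain ⟨v, hv⟩ : S.Nonempty := card_pos.1 (hS.trans_lt' (by positivity))
    have hdeg := hT.card_out_add_card_in hv
    obtain hout | hin : 2 ^ t ≤ #{x ∈ S | T v x} ∨ 2 ^ t ≤ #{x ∈ S | T x v} := by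
      rw [pow_succ] at hS
      omega
    · obtain ⟨l, hl, hpair, hmem⟩ := ih _ hout
      simp only [mem_filter] at hmem
      exact ⟨v :: l, by simp [hl], List.pairwise_cons.2 ⟨fun x hx => (hmem x hx).2, hpair⟩,
        List.forall_mem_cons.2 ⟨hv, fun x hx => (hmem x hx).1⟩⟩
    · obtain ⟨l, hl, hpair, hmem⟩ := ih _ hin
      simp only [mem_filter] at hmem
      refine ⟨l ++ [v], by simp [hl], List.pairwise_append.2 ⟨hpair, by simp, ?_⟩, ?_⟩
      · simpa only [List.mem_singleton, forall_eq] using fun x hx => (hmem x hx).2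
      · exact List.forall_mem_append.2 ⟨fun x hx => (hmem x hx).1, by simpa using hv⟩

end IsTournament

lemma uPat_or_uPat_of_ne {t : ℕ} {p q : Fin 3 × Fin t} (hpq : p ≠ q) : UPat t p q ∨ UPat t q p := by
  have hcases : ∀ i j : Fin 3, i = j ∨ j = i + 1 ∨ i = j + 1 := by decide
  obtain hij | hij | hij := hcases p.1 q.1
  · obtain hlt | hlt := lt_or_gt_of_ne fun h => hpq (Prod.ext hij h)
    · exact Or.inl (Or.inl ⟨hij, hlt⟩)
    · exact Or.inr (Or.inl ⟨hij.symm, hlt⟩)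
  · exact Or.inl (Or.inr hij)
  · exact Or.inr (Or.inr hij)

namespace IsTournament

variable {V : Type*} {T : V → V → Prop}

lemma injective_of_uPat (hT : IsTournament T) {t : ℕ} {f : Fin 3 × Fin t → V}
    (hf : ∀ p q, UPat t p q → T (f p) (f q)) : Function.Injective f := by
  intro p q hpq
  by_contra hne
  obtain h | h := uPat_or_uPat_of_ne hne
  · exact hT.ne (hf p q h) hpq
  · exact hT.ne (hf q p h) hpq.symm

lemma containsU_of_box (hT : IsTournament T) (t : ℕ) (S : Fin 3 → Finset V)
    (hS : ∀ i, 2 ^ t ≤ #(S i)) (h : ∀ i, ∀ x ∈ S i, ∀ y ∈ S (i + 1), T x y) : ContainsU T t := by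
  choose l hlen hpair hmem using fun i => hT.exists_transitive_list t (S i) (hS i)
  let f : Fin 3 × Fin t → V := fun p => (l p.1)[p.2.1]'(by rw [hlen]; exact p.2.2)
  have hf : ∀ p q, UPat t p q → T (f p) (f q) := by
    rintro ⟨i, a⟩ ⟨j, b⟩ (⟨hij, hab⟩ | hij)
    · obtain rfl : i = j := hij
      exact List.pairwise_iff_getElem.1 (hpair i) _ _ _ _ hab
    · obtain rfl : j = i + 1 := hij
      exact h i _ (hmem _ _ (List.getElem_mem _)) _ (hmem _ _ (List.getElem_mem _))
  exact ⟨f, hT.injective_of_uPat hf, hf⟩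

end IsTournament

open Classical in
/-- The pairs `(x, y)` of vertices of `S` that form a cyclic triangle `v → x → y → v` with `v`. -/
noncomputable def cyclicPairs {V : Type*} (T : V → V → Prop) (S : Finset V) (v : V) :
    Finset (V × V) :=
  {p ∈ S ×ˢ S | T v p.1 ∧ T p.1 p.2 ∧ T p.2 v}

lemma mem_cyclicPairs {V : Type*} {T : V → V → Prop} {S : Finset V} {v : V} {p : V × V} :
    p ∈ cyclicPairs T S v ↔ (p.1 ∈ S ∧ p.2 ∈ S) ∧ T v p.1 ∧ T p.1 p.2 ∧ T p.2 v := by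
  simp only [cyclicPairs, mem_filter, mem_product]

lemma exists_sum_card_cyclicPairs_lt (t : ℕ) {c : ℝ} (hc : 0 < c) :
    ∃ M : ℕ, ∀ {V : Type*} {T : V → V → Prop}, IsTournament T → ¬ ContainsU T t →
      ∀ {X W : Finset V}, M ≤ #X → M ≤ #W →
        ∑ x ∈ X, (#(cyclicPairs T W x) : ℝ) < c * #X * (#W * #W) := by
  classical
  obtain ⟨M, hM⟩ := exists_box_of_dense (2 ^ t) hc
  refine ⟨M, fun {V T} hT hU X W hX hW => ?_⟩
  by_contra! hdense
  obtain ⟨S₁, hS₁, S₂, hS₂, S₃, hS₃, hbox⟩ :=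
    hM (E := fun x y z => T x y ∧ T y z ∧ T z x) hX hW hW
      (hdense.trans_eq (by simp only [cyclicPairs]; congr!))
  replace hS₁ := (mem_powersetCard.1 hS₁).2
  replace hS₂ := (mem_powersetCard.1 hS₂).2
  replace hS₃ := (mem_powersetCard.1 hS₃).2
  obtain ⟨x₀, hx₀⟩ : S₁.Nonempty := card_pos.1 (hS₁ ▸ by positivity)
  obtain ⟨y₀, hy₀⟩ : S₂.Nonempty := card_pos.1 (hS₂ ▸ by positivity)
  obtain ⟨z₀, hz₀⟩ : S₃.Nonempty := card_pos.1 (hS₃ ▸ by positivity)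
  refine hU (hT.containsU_of_box t ![S₁, S₂, S₃] ?_ ?_)
  · simpa only [Fin.forall_fin_succ] using ⟨hS₁.ge, hS₂.ge, hS₃.ge, fun i => i.elim0⟩
  · intro i
    fin_cases i
    · exact fun x hx y hy => (hbox x hx y hy z₀ hz₀).1
    · exact fun y hy z hz => (hbox x₀ hx₀ y hy z hz).2.1
    · exact fun z hz x hx => (hbox x hx y₀ hy₀ z hz).2.2

namespace IsTournament

variable {V : Type*} {T : V → V → Prop}

open Classical in
lemma two_mul_sum_card_out (hT : IsTournament T) (W : Finset V) :
    2 * ∑ v ∈ W, #{x ∈ W | T v x} + #W = #W ^ 2 := by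
  have hswap : ∑ v ∈ W, #{x ∈ W | T v x} = ∑ v ∈ W, #{x ∈ W | T x v} :=
    sum_card_bipartiteAbove_eq_sum_card_bipartiteBelow T
  calc 2 * ∑ v ∈ W, #{x ∈ W | T v x} + #W
      = ∑ v ∈ W, (#{x ∈ W | T v x} + #{x ∈ W | T x v} + 1) := by
        rw [sum_add_distrib, sum_add_distrib, ← hswap, ← two_mul, ← card_eq_sum_ones]
    _ = #W ^ 2 := by
        rw [sum_congr rfl fun v hv => hT.card_out_add_card_in hv, sum_const, smul_eq_mul, sq]

open Classical in
lemma sum_sq_card_out_le (hT : IsTournament T) (W : Finset V) :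
    ∑ x ∈ W, #{y ∈ W | T x y} ^ 2 ≤
      2 * ∑ v ∈ W, #{x ∈ W | T v x} * #{x ∈ W | T x v} + ∑ x ∈ W, #{y ∈ W | T x y} := by
  have hpaths : ∑ v ∈ W, #{x ∈ W | T v x} * #{x ∈ W | T x v} =
      ∑ x ∈ W, ∑ v ∈ W with T x v, #{y ∈ W | T v y} := by
    simp only [sum_filter, card_eq_sum_ones, mul_sum, mul_ite, mul_one, mul_zero]
    exact sum_comm
  rw [hpaths, mul_sum, ← sum_add_distrib]
  refine sum_le_sum fun x _ => ?_
  rw [← hT.two_mul_sum_card_out]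
  gcongr
  exact filter_subset _ _

open Classical in
lemma card_pow_three_le_sum_out_mul_in (hT : IsTournament T) {W : Finset V} (hW : 6 ≤ #W) :
    #W ^ 3 ≤ 24 * ∑ v ∈ W, #{x ∈ W | T v x} * #{x ∈ W | T x v} := by
  have hedges := hT.two_mul_sum_card_out W
  have hcauchy := (sq_sum_le_card_mul_sum_sq (s := W) (f := fun x => #{y ∈ W | T x y})).trans
    (Nat.mul_le_mul_left _ (hT.sum_sq_card_out_le W))
  generalize ∑ v ∈ W, #{x ∈ W | T v x} = E at hedges hcauchy
  generalize ∑ v ∈ W, #{x ∈ W | T v x} * #{x ∈ W | T x v} = N at hcauchy ⊢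
  generalize #W = m at *
  zify at *
  have hE : 2 * (E : ℤ) = m ^ 2 - m := by linarith
  have hmul : (m : ℤ) * (m * ((m - 1) * (m - 3))) ≤ m * (8 * N) :=
    calc (m : ℤ) * (m * ((m - 1) * (m - 3))) = (2 * E) ^ 2 - 2 * m * (2 * E) := by rw [hE]; ring
      _ ≤ m * (8 * N) := by linarith
  have hN : (m : ℤ) * ((m - 1) * (m - 3)) ≤ 8 * N := le_of_mul_le_mul_left hmul (by linarith)
  calc (m ^ 3 : ℤ) ≤ 3 * (m * ((m - 1) * (m - 3))) := by
        nlinarith [mul_nonneg (sq_nonneg (m : ℤ)) (sub_nonneg.2 hW)]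
    _ ≤ 24 * N := by linarith

end IsTournament

open Classical in
lemma exists_pivot (t : ℕ) {δ : ℝ} (hδ : 0 < δ) :
    ∃ M : ℕ, ∀ {V : Type*} {T : V → V → Prop}, IsTournament T → ¬ ContainsU T t →
      ∀ {W : Finset V}, M ≤ #W → ∃ v ∈ W,
        #(cyclicPairs T W v) ≤ 2 * δ * (#{x ∈ W | T v x} * #{x ∈ W | T x v}) := by
  obtain ⟨M, hM⟩ := exists_sum_card_cyclicPairs_lt t (c := δ / 12) (by positivity)
  refine ⟨max M 6, fun {V T} hT hU W hW => ?_⟩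
  rw [max_le_iff] at hW
  by_contra! hcyclic
  have hpaths : (#W : ℝ) ^ 3 ≤ 24 * ∑ v ∈ W, (#{x ∈ W | T v x} * #{x ∈ W | T x v} : ℝ) := by
    exact_mod_cast hT.card_pow_three_le_sum_out_mul_in hW.2
  refine (hM hT hU hW.1 hW.1).not_ge ?_
  calc δ / 12 * #W * (#W * #W) = δ / 12 * (#W : ℝ) ^ 3 := by ring
    _ ≤ δ / 12 * (24 * ∑ v ∈ W, (#{x ∈ W | T v x} * #{x ∈ W | T x v} : ℝ)) := by gcongr
    _ = ∑ v ∈ W, 2 * δ * (#{x ∈ W | T v x} * #{x ∈ W | T x v}) := by rw [← mul_sum]; ring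
    _ ≤ ∑ v ∈ W, (#(cyclicPairs T W v) : ℝ) := sum_le_sum fun v hv => (hcyclic v hv).le

/-! ### Backward edges -/

open Classical in
/-- The edges `p.1 → p.2` of `T` inside `S` that are backward for the ranking `r`, which may have
ties: an edge between two vertices of equal rank counts as backward, so that breaking ties never
increases the number of backward edges. -/
noncomputable def backEdges {V α : Type*} [LinearOrder α] (T : V → V → Prop) (r : V → α)
    (S : Finset V) : Finset (V × V) :=
  {p ∈ S ×ˢ S | T p.1 p.2 ∧ r p.2 ≤ r p.1}

lemma mem_backEdges {V α : Type*} [LinearOrder α] {T : V → V → Prop} {r : V → α} {S : Finset V}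
    {p : V × V} : p ∈ backEdges T r S ↔ (p.1 ∈ S ∧ p.2 ∈ S) ∧ T p.1 p.2 ∧ r p.2 ≤ r p.1 := by
  simp only [backEdges, mem_filter, mem_product]

open Classical in
lemma IsTournament.exists_card_backEdges_le_add {V : Type*} {T : V → V → Prop}
    (hT : IsTournament T) (W : Finset V) (v : V) (r₁ r₂ : V → ℕ) :
    ∃ r : V → ℕ, #(backEdges T r W) ≤ #(backEdges T r₁ {x ∈ W | T x v}) +
      #(backEdges T r₂ {x ∈ W | T v x}) + #(cyclicPairs T W v) := by
  let K := {x ∈ W | T x v}.sup r₁ + 1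
  have hK : ∀ x ∈ W, T x v → r₁ x < K := fun x hx hxv =>
    Nat.lt_succ_of_le (le_sup (mem_filter.2 ⟨hx, hxv⟩))
  refine ⟨fun x => if T x v then r₁ x else if x = v then K else K + 1 + r₂ x, ?_⟩
  refine (card_le_card ?_).trans ((card_union_le _ _).trans (Nat.add_le_add_right
    (card_union_le _ _) _))
  -- A backward edge between different blocks goes from an out-neighbour to an in-neighbour of `v`.
  rintro ⟨x, y⟩ hxy
  have hasymm : ∀ x y, T x y → ¬ T y x := fun _ _ => hT.asymm
  have htotal : ∀ x, x ≠ v → ¬ T x v → T v x := fun _ => hT.of_not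
  simp only [mem_union, mem_backEdges, mem_cyclicPairs, mem_filter] at hxy ⊢
  grind

open Classical in
lemma exists_card_backEdges_le (t : ℕ) {δ : ℝ} (hδ : 0 < δ) :
    ∃ M : ℕ, ∀ {V : Type*} {T : V → V → Prop}, IsTournament T → ¬ ContainsU T t →
      ∀ W : Finset V, ∃ r : V → ℕ, #(backEdges T r W) ≤ δ * #W ^ 2 + M * #W := by
  obtain ⟨M, hM⟩ := exists_pivot t hδ
  refine ⟨M, fun {V T} hT hU W => ?_⟩
  induction W using Finset.strongInduction with
  | H W ih =>
    obtain hsmall | hlarge := lt_or_ge #W M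
    · refine ⟨0, ?_⟩
      calc (#(backEdges T (0 : V → ℕ) W) : ℝ)
          ≤ #W * #W := by exact_mod_cast (card_filter_le _ _).trans_eq (card_product W W)
        _ ≤ M * #W := by gcongr
        _ ≤ δ * #W ^ 2 + M * #W := le_add_of_nonneg_left (by positivity)
    · obtain ⟨v, hv, hpivot⟩ := hM hT hU hlarge
      obtain ⟨r₁, hr₁⟩ := ih {x ∈ W | T x v} (filter_ssubset.2 ⟨v, hv, hT.1 v⟩)
      obtain ⟨r₂, hr₂⟩ := ih {x ∈ W | T v x} (filter_ssubset.2 ⟨v, hv, hT.1 v⟩)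
      obtain ⟨r, hr⟩ := hT.exists_card_backEdges_le_add W v r₁ r₂
      refine ⟨r, ?_⟩
      have hdeg : (#{x ∈ W | T v x} + #{x ∈ W | T x v} : ℝ) ≤ #W := by
        exact_mod_cast (Nat.le_succ _).trans_eq (hT.card_out_add_card_in hv)
      calc (#(backEdges T r W) : ℝ)
          ≤ #(backEdges T r₁ {x ∈ W | T x v}) + #(backEdges T r₂ {x ∈ W | T v x}) +
              #(cyclicPairs T W v) := by exact_mod_cast hr
        _ ≤ δ * (#{x ∈ W | T v x} + #{x ∈ W | T x v}) ^ 2 +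
              M * (#{x ∈ W | T v x} + #{x ∈ W | T x v}) := by linarith
        _ ≤ δ * #W ^ 2 + M * #W := by gcongr

/-! ### Optimal rankings -/

/-- The ranking `r` has the fewest backward edges inside `S` among all rankings of the vertices,
with values in any linear order from the universe of the values of `r`. -/
def MinimizesBackEdges.{u, v} {V : Type u} {α : Type v} [LinearOrder α] (T : V → V → Prop)
    (r : V → α) (S : Finset V) : Prop :=
  ∀ ⦃β : Type v⦄ [LinearOrder β] (r' : V → β), #(backEdges T r S) ≤ #(backEdges T r' S)

lemma card_backEdges_flip {V α : Type*} [LinearOrder α] (T : V → V → Prop) (r : V → α)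
    (S : Finset V) :
    #(backEdges (flip T) (OrderDual.toDual ∘ r) S) = #(backEdges T r S) := by
  refine card_equiv (Equiv.prodComm V V) fun p => ?_
  simp [mem_backEdges, flip, and_comm]

namespace MinimizesBackEdges

variable {V α : Type*} [LinearOrder α] {T : V → V → Prop} {r : V → α} {S : Finset V}

lemma flip (hr : MinimizesBackEdges T r S) :
    MinimizesBackEdges (flip T) (OrderDual.toDual ∘ r) S := by
  intro β _ r'
  rw [card_backEdges_flip, ← card_backEdges_flip (_root_.flip T) r']
  exact hr _

open Classical in
lemma interval (hr : MinimizesBackEdges T r S) (a b : α) :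
    MinimizesBackEdges T r {x ∈ S | a ≤ r x ∧ r x ≤ b} := by
  intro β _ r'
  set I := {x ∈ S | a ≤ r x ∧ r x ≤ b} with hI
  -- `g` gathers `I` at rank `a`, where `r'` orders it, so that no edge leaving or entering `I`
  -- becomes backward.
  let g : V → α ×ₗ β := fun x => toLex (if x ∈ I then a else r x, r' x)
  have hIS : backEdges T r I ⊆ backEdges T r S := fun p => by
    simp only [mem_backEdges, hI, mem_filter]
    tauto
  have hg : backEdges T g S ⊆ (backEdges T r S \ backEdges T r I) ∪ backEdges T r' I := by
    intro p hp
    simp only [g, mem_union, mem_sdiff, mem_backEdges, Prod.Lex.toLex_le_toLex, hI,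
      mem_filter] at hp ⊢
    grind
  have hcard := (hr g).trans ((card_le_card hg).trans (card_union_le _ _))
  rw [card_sdiff_of_subset hIS] at hcard
  have := card_le_card hIS
  omega

open Classical in
lemma card_out_le_card_in (hr : MinimizesBackEdges T r S) {k : V} (hk : k ∈ S) {c : α}
    (hc : c ≤ r k) :
    #{x ∈ S | (c ≤ r x ∧ r x < r k) ∧ T k x} ≤ #{x ∈ S | (c ≤ r x ∧ r x < r k) ∧ T x k} := by
  -- `r'` puts `k` just before rank `c`, which reverses only its edges to the ranks in `[c, r k)`.
  let r' : V → α ×ₗ Fin 2 := fun x => if x = k then toLex (c, 0) else toLex (r x, 1)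
  calc #{x ∈ S | (c ≤ r x ∧ r x < r k) ∧ T k x}
      = #({x ∈ S | (c ≤ r x ∧ r x < r k) ∧ T k x}.map (.sectR k V)) := (card_map _).symm
    _ ≤ #(backEdges T r S \ backEdges T r' S) := card_le_card ?_
    _ ≤ #(backEdges T r' S \ backEdges T r S) := card_sdiff_le_card_sdiff_iff.2 (hr r')
    _ ≤ #({x ∈ S | (c ≤ r x ∧ r x < r k) ∧ T x k}.map (.sectL V k)) := card_le_card ?_
    _ = #{x ∈ S | (c ≤ r x ∧ r x < r k) ∧ T x k} := card_map _
  · rintro ⟨x, y⟩ hxy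
    simp only [mem_map, mem_filter, Function.Embedding.sectR_apply, Prod.mk.injEq, mem_sdiff,
      mem_backEdges, r'] at hxy ⊢
    grind [Prod.Lex.toLex_le_toLex]
  · rintro ⟨x, y⟩ hxy
    simp only [mem_map, mem_filter, Function.Embedding.sectL_apply, Prod.mk.injEq, mem_sdiff,
      mem_backEdges, r'] at hxy ⊢
    grind [Prod.Lex.toLex_le_toLex]

end MinimizesBackEdges

lemma exists_median {V α : Type*} [LinearOrder α] (r : V → α) {A : Finset V} (hA : A.Nonempty) :
    ∃ m ∈ A, #A ≤ 2 * #{x ∈ A | r x ≤ r m} ∧ #A ≤ 2 * #{x ∈ A | r m ≤ r x} := by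
  obtain ⟨b, hb, hmax⟩ := exists_max_image A r hA
  have hhalf : ({m ∈ A | #A ≤ 2 * #{x ∈ A | r x ≤ r m}} : Finset V).Nonempty := by
    refine ⟨b, mem_filter.2 ⟨hb, ?_⟩⟩
    rw [filter_true_of_mem hmax]
    omega
  obtain ⟨m, hm, hmin⟩ := exists_min_image _ r hhalf
  obtain ⟨hmA, hbelow⟩ := mem_filter.1 hm
  refine ⟨m, hmA, hbelow, ?_⟩
  have hlt : 2 * #{x ∈ A | r x < r m} ≤ #A := by
    obtain hempty | hne := {x ∈ A | r x < r m}.eq_empty_or_nonempty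
    · simp [hempty]
    obtain ⟨l, hl, hlmax⟩ := exists_max_image _ r hne
    obtain ⟨hlA, hlm⟩ := mem_filter.1 hl
    by_contra! h
    refine hlm.not_ge (hmin l (mem_filter.2 ⟨hlA, h.le.trans ?_⟩))
    gcongr with x hx
    exact fun hxm => hlmax x (mem_filter.2 ⟨hx, hxm⟩)
  have := card_filter_add_card_filter_not (s := A) fun x => r x < r m
  simp only [not_lt] at this
  omega

open Classical in
lemma MinimizesBackEdges.exists_out_before_in {V α : Type*} [LinearOrder α] {T : V → V → Prop}
    {r : V → α} {S : Finset V} (hr : MinimizesBackEdges T r S) {k : V} (hk : k ∈ S) :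
    ∃ A ⊆ {x ∈ S | T k x}, ∃ B ⊆ {x ∈ S | T x k}, (∀ x ∈ A, ∀ y ∈ B, r x ≤ r y) ∧
      #{x ∈ S | r x < r k ∧ T k x} ≤ 2 * #A ∧ #{x ∈ S | r x < r k ∧ T k x} ≤ 2 * #B := by
  obtain hempty | hne := {x ∈ S | r x < r k ∧ T k x}.eq_empty_or_nonempty
  · exact ⟨∅, empty_subset _, ∅, empty_subset _, by simp, by simp [hempty], by simp [hempty]⟩
  obtain ⟨m, hm, hbelow, habove⟩ := exists_median r hne
  have hmove := hr.card_out_le_card_in hk (mem_filter.1 hm).2.1.le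
  refine ⟨_, fun x hx => ?_, _, fun x hx => ?_, fun x hx y hy => ?_, hbelow,
    (habove.trans_eq ?_).trans (Nat.mul_le_mul_left 2 hmove)⟩
  · grind
  · grind
  · grind
  · congr 2
    ext x
    grind

namespace IsTournament

variable {V α : Type*} [LinearOrder α] {T : V → V → Prop} {r : V → α} {S : Finset V} {k : V}

open Classical in
lemma sq_card_out_below_le (hT : IsTournament T) (hr : MinimizesBackEdges T r S) (hk : k ∈ S) :
    #{x ∈ S | r x < r k ∧ T k x} ^ 2 ≤ 4 * (#(cyclicPairs T S k) + #(backEdges T r S)) := by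
  obtain ⟨A, hA, B, hB, hAB, hcardA, hcardB⟩ := hr.exists_out_before_in hk
  have hsub : A ×ˢ B ⊆ cyclicPairs T S k ∪ (backEdges T r S).image Prod.swap := by
    rintro ⟨x, y⟩ hxy
    obtain ⟨hx, hy⟩ := mem_product.1 hxy
    obtain ⟨hxS, hkx⟩ := mem_filter.1 (hA hx)
    obtain ⟨hyS, hyk⟩ := mem_filter.1 (hB hy)
    by_cases h : T x y
    · exact mem_union_left _ (mem_cyclicPairs.2 ⟨⟨hxS, hyS⟩, hkx, h, hyk⟩)
    · have hne : x ≠ y := by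
        rintro rfl
        exact hT.asymm hkx hyk
      exact mem_union_right _ (mem_image.2
        ⟨(y, x), mem_backEdges.2 ⟨⟨hyS, hxS⟩, hT.of_not hne h, hAB x hx y hy⟩, rfl⟩)
  calc #{x ∈ S | r x < r k ∧ T k x} ^ 2
      ≤ (2 * #A) * (2 * #B) := by rw [sq]; exact Nat.mul_le_mul hcardA hcardB
    _ = 4 * #(A ×ˢ B) := by rw [card_product]; ring
    _ ≤ 4 * (#(cyclicPairs T S k) + #(backEdges T r S)) := by
        gcongr
        exact ((card_le_card hsub).trans (card_union_le _ _)).trans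
          (Nat.add_le_add_left card_image_le _)

end IsTournament

lemma card_cyclicPairs_flip {V : Type*} (T : V → V → Prop) (S : Finset V) (v : V) :
    #(cyclicPairs (flip T) S v) = #(cyclicPairs T S v) := by
  refine card_equiv (Equiv.prodComm V V) fun p => ?_
  simp only [mem_cyclicPairs, flip, Equiv.prodComm_apply, Prod.fst_swap, Prod.snd_swap]
  tauto

open Classical in
/-- The vertices of `S` joined to `k` by an edge that is backward for the ranking `r`. -/
noncomputable def backNeighbors {V α : Type*} [LinearOrder α] (T : V → V → Prop) (r : V → α)
    (S : Finset V) (k : V) : Finset V :=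
  {l ∈ S | (r l < r k ∧ T k l) ∨ (r k < r l ∧ T l k)}

open Classical in
lemma IsTournament.sq_card_backNeighbors_le {V α : Type*} [LinearOrder α] {T : V → V → Prop}
    {r : V → α} {S : Finset V} {k : V} (hT : IsTournament T) (hr : MinimizesBackEdges T r S)
    (hk : k ∈ S) :
    #(backNeighbors T r S k) ^ 2 ≤ 16 * (#(cyclicPairs T S k) + #(backEdges T r S)) := by
  have hbelow := hT.sq_card_out_below_le hr hk
  have habove : #{x ∈ S | r k < r x ∧ T x k} ^ 2 ≤
      4 * (#(cyclicPairs T S k) + #(backEdges T r S)) := by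
    have := hT.flip.sq_card_out_below_le hr.flip hk
    rwa [card_cyclicPairs_flip, card_backEdges_flip] at this
  calc #(backNeighbors T r S k) ^ 2
      ≤ (#{x ∈ S | r x < r k ∧ T k x} + #{x ∈ S | r k < r x ∧ T x k}) ^ 2 := by
        rw [backNeighbors, filter_or]
        gcongr
        exact card_union_le _ _
    _ ≤ 2 * (#{x ∈ S | r x < r k ∧ T k x} ^ 2 + #{x ∈ S | r k < r x ∧ T x k} ^ 2) := add_sq_le
    _ ≤ 16 * (#(cyclicPairs T S k) + #(backEdges T r S)) := by omega

lemma MinimizesBackEdges.card_backEdges_le.{u, v} {V : Type u} {α : Type v} [LinearOrder α]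
    {T : V → V → Prop} {r : V → α} {S : Finset V} (hr : MinimizesBackEdges T r S) (r' : V → ℕ) :
    #(backEdges T r S) ≤ #(backEdges T r' S) :=
  hr (ULift.up.{v} ∘ r')

open Classical in
lemma exists_card_large_backNeighbors_le (t : ℕ) {ε : ℝ} (hε : 0 < ε) :
    ∃ M : ℕ, ∀ {V α : Type*} [LinearOrder α] {T : V → V → Prop} {r : V → α} {S : Finset V},
      IsTournament T → ¬ ContainsU T t → MinimizesBackEdges T r S → M ≤ #S →
        #{k ∈ S | ε * #S < #(backNeighbors T r S k)} ≤ M := by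
  obtain ⟨M₁, hM₁⟩ := exists_card_backEdges_le t (δ := ε ^ 2 / 64) (by positivity)
  obtain ⟨M₂, hM₂⟩ := exists_sum_card_cyclicPairs_lt t (c := ε ^ 2 / 32) (by positivity)
  obtain ⟨M, hM⟩ := ((eventually_le_mul_natCast M₁ (by positivity : 0 < ε ^ 2 / 64)).and
    (Filter.eventually_ge_atTop M₂)).exists_forall_of_atTop
  refine ⟨max M M₂, fun {V α} _ {T r S} hT hU hr hS => ?_⟩
  set X := {k ∈ S | ε * #S < #(backNeighbors T r S k)}
  by_contra! hX
  rw [max_lt_iff] at hX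
  rw [max_le_iff] at hS
  obtain ⟨r', hr'⟩ := hM₁ hT hU S
  have hback : (#(backEdges T r S) : ℝ) ≤ ε ^ 2 / 32 * #S ^ 2 :=
    calc (#(backEdges T r S) : ℝ)
        ≤ #(backEdges T r' S) := by exact_mod_cast hr.card_backEdges_le r'
      _ ≤ ε ^ 2 / 64 * #S ^ 2 + M₁ * #S := hr'
      _ ≤ ε ^ 2 / 64 * #S ^ 2 + ε ^ 2 / 64 * #S * #S := by
          gcongr
          exact (hM _ hS.1).1
      _ = ε ^ 2 / 32 * #S ^ 2 := by ring
  have hcyclic : ∀ k ∈ X, ε ^ 2 / 32 * (#S * #S) ≤ #(cyclicPairs T S k) := by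
    intro k hk
    obtain ⟨hkS, hlarge⟩ := mem_filter.1 hk
    have hsq := pow_le_pow_left₀ (by positivity) hlarge.le 2
    have hbound : (#(backNeighbors T r S k) : ℝ) ^ 2 ≤
        16 * (#(cyclicPairs T S k) + #(backEdges T r S)) := by
      exact_mod_cast hT.sq_card_backNeighbors_le hr hkS
    linarith
  refine (hM₂ hT hU hX.2.le hS.2).not_ge ?_
  calc ε ^ 2 / 32 * #X * (#S * #S) = ∑ _k ∈ X, ε ^ 2 / 32 * (#S * #S : ℝ) := by
        rw [sum_const, nsmul_eq_mul]
        ring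
    _ ≤ ∑ k ∈ X, (#(cyclicPairs T S k) : ℝ) := sum_le_sum hcyclic

lemma ncard_setOf_eq_card {α β : Type*} (e : α ≃ β) {p : α → Prop} {F : Finset β}
    (h : ∀ a, p a ↔ e a ∈ F) : {a | p a}.ncard = #F := by
  rw [← Set.ncard_coe_finset, ← Set.ncard_image_of_injective _ e.injective]
  congr 1
  ext b
  simp [e.image_eq_preimage_symm, h]

section Ordering

variable {N : ℕ} {V : Type*} {T : V → V → Prop}

lemma IsTournament.backCount_eq (hT : IsTournament T) (σ : Fin N ≃ V) :
    backCount T σ = #(backEdges T σ.symm (univ.map σ.toEmbedding)) := by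
  refine ncard_setOf_eq_card ((Equiv.prodComm _ _).trans (σ.prodCongr σ)) fun p => ?_
  simp only [mem_backEdges, Equiv.trans_apply, Equiv.prodComm_apply, Equiv.prodCongr_apply,
    Prod.map_fst, Prod.map_snd, Prod.fst_swap, Prod.snd_swap, mem_map_equiv, mem_univ,
    Equiv.symm_apply_apply, true_and, and_self]
  grind [hT.1 (σ p.1)]

lemma IsTournament.minimizesBackEdges (hT : IsTournament T) {σ : Fin N ≃ V}
    (hσ : ∀ τ : Fin N ≃ V, backCount T σ ≤ backCount T τ) :
    MinimizesBackEdges T σ.symm (univ.map σ.toEmbedding) := by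
  intro β _ r'
  let τ : Fin N ≃ V := (Tuple.sort (r' ∘ σ)).trans σ
  have hτ : Monotone (r' ∘ τ) := Tuple.monotone_sort (r' ∘ σ)
  rw [← hT.backCount_eq]
  refine (hσ τ).trans ((hT.backCount_eq τ).trans_le (card_le_card fun p hp => ?_))
  simp only [mem_backEdges, mem_map_equiv, mem_univ, and_self, true_and] at hp ⊢
  exact ⟨hp.1, by simpa using hτ hp.2⟩

lemma IsTournament.minimizesBackEdges_Icc (hT : IsTournament T) {σ : Fin N ≃ V}
    (hσ : ∀ τ : Fin N ≃ V, backCount T σ ≤ backCount T τ) (a b : Fin N) :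
    MinimizesBackEdges T σ.symm ((Icc a b).map σ.toEmbedding) := by
  classical
  convert (hT.minimizesBackEdges hσ).interval a b using 1
  ext x
  simp [mem_map_equiv]

end Ordering

lemma ncard_backward_eq_card_backNeighbors {N : ℕ} {V : Type*} (T : V → V → Prop)
    (σ : Fin N ≃ V) (a b k : Fin N) :
    {l : Fin N | (a : ℕ) ≤ l ∧ (l : ℕ) ≤ b ∧
      (((l : ℕ) < k ∧ T (σ k) (σ l)) ∨ ((k : ℕ) < l ∧ T (σ l) (σ k)))}.ncard =
      #(backNeighbors T σ.symm ((Icc a b).map σ.toEmbedding) (σ k)) := by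
  refine ncard_setOf_eq_card σ fun l => ?_
  simp [backNeighbors, and_assoc]

theorem statement12_general (t : ℕ) {ε : ℝ} (hε : 0 < ε) :
    ∃ C₁ C₂ : ℝ, 0 < C₁ ∧ 0 < C₂ ∧
      ∀ (N : ℕ) (V : Type*) (T : V → V → Prop), IsTournament T →
        ¬ ContainsU T t →
        ∀ σ : Fin N ≃ V,
          (∀ τ : Fin N ≃ V, backCount T σ ≤ backCount T τ) →
          ∀ a b : ℕ, a ≤ b → b < N →
            C₁ ≤ ((b - a + 1 : ℕ) : ℝ) →
            (({k : Fin N | a ≤ (k : ℕ) ∧ (k : ℕ) ≤ b ∧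
                ε * ((b - a + 1 : ℕ) : ℝ) <
                  ((({l : Fin N | a ≤ (l : ℕ) ∧ (l : ℕ) ≤ b ∧
                      (((l : ℕ) < (k : ℕ) ∧ T (σ k) (σ l)) ∨
                        ((k : ℕ) < (l : ℕ) ∧ T (σ l) (σ k)))}).ncard : ℝ))}).ncard : ℝ) ≤ C₂ := by
  classical
  obtain ⟨M, hM⟩ := exists_card_large_backNeighbors_le t hε
  refine ⟨M + 1, M + 1, by positivity, by positivity, fun N V T hT hU σ hσ a b hab hb hlen => ?_⟩
  lift a to Fin N using hab.trans_lt hb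
  lift b to Fin N using hb
  set S := (Icc a b).map σ.toEmbedding with hS
  have hcard : #S = b - a + 1 := by
    rw [hS, card_map, Fin.card_Icc]
    omega
  have hMS : M ≤ #S := by
    rw [← hcard] at hlen
    exact_mod_cast (le_add_of_nonneg_right zero_le_one).trans hlen
  have hmany := hM hT hU (hT.minimizesBackEdges_Icc hσ a b) hMS
  rw [ncard_setOf_eq_card σ
    (F := {k ∈ S | ε * #S < #(backNeighbors T σ.symm S k)}) fun k => ?_]
  · exact_mod_cast hmany.trans (Nat.le_succ M)
  · rw [ncard_backward_eq_card_backNeighbors, mem_filter, hcard]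
    simp [S, and_assoc]

end TournamentOrderings

/-- **Claim.** For `t ≥ 3` and `ε > 0` there are `C₁, C₂ > 0` such that: if `T` is a
tournament with no copy of `𝒰_t` and `σ` is an ordering of its vertices minimising the
number of backward edges, then every interval of positions `[a, b]` of length at least
`C₁` contains at most `C₂` vertices incident with more than `ε·(b - a + 1)` backward edges
having both endpoints in the interval. -/
theorem statement12 (t : ℕ) (ht : 3 ≤ t) (ε : ℝ) (hε : 0 < ε) :
    ∃ C₁ C₂ : ℝ, 0 < C₁ ∧ 0 < C₂ ∧
      ∀ (N : ℕ) (T : Fin N → Fin N → Prop), IsTournament T →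
        ¬ ContainsU T t →
        ∀ σ : Equiv.Perm (Fin N),
          (∀ τ : Equiv.Perm (Fin N), backCount T σ ≤ backCount T τ) →
          ∀ a b : ℕ, a ≤ b → b < N →
            C₁ ≤ ((b - a + 1 : ℕ) : ℝ) →
            (({k : Fin N | a ≤ (k : ℕ) ∧ (k : ℕ) ≤ b ∧
                ε * ((b - a + 1 : ℕ) : ℝ) <
                  ((({l : Fin N | a ≤ (l : ℕ) ∧ (l : ℕ) ≤ b ∧
                      (((l : ℕ) < (k : ℕ) ∧ T (σ k) (σ l)) ∨
                        ((k : ℕ) < (l : ℕ) ∧ T (σ l) (σ k)))}).ncard : ℝ))}).ncard : ℝ) ≤ C₂ := by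
  obtain ⟨C₁, C₂, hC₁, hC₂, h⟩ := statement12_general t hε
  exact ⟨C₁, C₂, hC₁, hC₂, fun N => h N (Fin N)⟩
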